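/- arXiv:1910.05073 — 2 statements merged into one kernel-verified Lean document; each statement's English description precedes it below -/
import Mathlib

section
/- For any u, v in the unitary group U(H), the geodesic distance satisfies d(u,v) = max_{i=1,...,N} |arg λ_i|, where λ_1, ..., λ_N are the eigenvalues (with multiplicity) of u^{-1}v and arg : U(1) → (−π, π] is the principal argument (the inverse of θ ↦ e^{iθ} on (−π, π]). -/
noncomputable section

abbrev Hsp (N : ℕ) : Type := EuclideanSpace ℂ (Fin N)

abbrev Op (N : ℕ) : Type := Hsp N →L[ℂ] Hsp N

/-- A map `γ : ℝ → E` is piecewise C¹ on `[a,b]` if there is a partition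
`a = τ 0 ≤ τ 1 ≤ ⋯ ≤ τ n = b` such that `γ` is C¹ on each subinterval. -/
def PiecewiseC1On {E : Type*} [NormedAddCommGroup E] [NormedSpace ℝ E]
    (γ : ℝ → E) (a b : ℝ) : Prop :=
  ∃ (n : ℕ) (τ : ℕ → ℝ), τ 0 = a ∧ τ n = b ∧ (∀ i < n, τ i ≤ τ (i + 1)) ∧
    ∀ i < n, ContDiffOn ℝ 1 γ (Set.Icc (τ i) (τ (i + 1)))

/-- The length `L(γ) = ∫_a^b ‖γ'(t)‖ dt` of a curve. -/
def pathLength {E : Type*} [NormedAddCommGroup E] [NormedSpace ℝ E]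
    (γ : ℝ → E) (a b : ℝ) : ℝ :=
  ∫ t in a..b, ‖deriv γ t‖

/-- Geodesic distance on the unitary group of `EuclideanSpace ℂ (Fin N)`, for the
Finsler metric given by the operator norm: the infimum of lengths of piecewise C¹
curves in the unitary group joining `u` to `v`. -/
def geoDist (N : ℕ) (u v : Op N) : ℝ :=
  sInf {l | ∃ (a b : ℝ) (γ : ℝ → Op N), a ≤ b ∧ PiecewiseC1On γ a b ∧
    (∀ t ∈ Set.Icc a b, γ t ∈ unitary (Op N)) ∧ γ a = u ∧ γ b = v ∧
    l = pathLength γ a b}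

/-- `(u, φ)` belongs to the realization `Ũ(H) = {(u,φ) : det u = e^{iφ}}` of the
universal cover of the unitary group. -/
def InUCover (N : ℕ) (u : Op N) (φ : ℝ) : Prop :=
  u ∈ unitary (Op N) ∧
    LinearMap.det (u : Hsp N →ₗ[ℂ] Hsp N) = Complex.exp (φ * Complex.I)

/-- Geodesic distance on the universal cover `Ũ(H)`: the infimum of the lengths
`∫ ‖γ'(t)‖ dt` over piecewise C¹ curves `t ↦ (γ t, f t)` in `Ũ(H)` joining
`(u, φ)` to `(v, ψ)`. -/
def ucoverDist (N : ℕ) (u : Op N) (φ : ℝ) (v : Op N) (ψ : ℝ) : ℝ :=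
  sInf {l | ∃ (a b : ℝ) (γ : ℝ → Op N) (f : ℝ → ℝ), a ≤ b ∧
    PiecewiseC1On (fun t => (γ t, f t)) a b ∧
    (∀ t ∈ Set.Icc a b, InUCover N (γ t) (f t)) ∧
    γ a = u ∧ f a = φ ∧ γ b = v ∧ f b = ψ ∧
    l = pathLength γ a b}

/-- The multiset of eigenvalues (with multiplicity) of an endomorphism, i.e. the
roots of its characteristic polynomial. -/
def eigenvalueMultiset (N : ℕ) (w : Op N) : Multiset ℂ :=
  (LinearMap.charpoly (w : Hsp N →ₗ[ℂ] Hsp N)).roots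

/-- `θ ∈ R`: `(e^{iθ_j})_j` is the family of eigenvalues of `w` (with multiplicity)
and `∑ θ_j = c`. -/
def InRSet (N : ℕ) (w : Op N) (c : ℝ) (θ : Fin N → ℝ) : Prop :=
  Multiset.map (fun j => Complex.exp ((θ j : ℂ) * Complex.I)) Finset.univ.val
      = eigenvalueMultiset N w ∧ ∑ j, θ j = c

/-- `m = min { max_j |θ_j| : θ ∈ R }`. -/
def mval (N : ℕ) (w : Op N) (c : ℝ) : ℝ :=
  sInf {x | ∃ θ : Fin N → ℝ, InRSet N w c θ ∧ x = ⨆ j, |θ j|}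

end

/-!
Lower bound: if `x` is a unit eigenvector of `u⁻¹v` with eigenvalue `λ` and `γ` is a curve of
unitaries from `u` to `v`, then `t ↦ γ(t)x` is a curve on the unit sphere from `ux` to `λux`. The
endpoints enclose the angle `|arg λ|`, an angle is at most the length of any spherical curve
subtending it, and `‖γ'(t)x‖ ≤ ‖γ'(t)‖`.

Upper bound: let `X` be the principal logarithm of `u⁻¹v`, that is, `exp(iX) = u⁻¹v` with
`X = arg(u⁻¹v)` in the functional calculus. The curve `t ↦ u exp(itX)`, `0 ≤ t ≤ 1`, joins `u` to
`v` with constant speed `‖X‖`, the largest `|arg λ|` over the spectrum.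
-/

open Set Filter Topology MeasureTheory InnerProductGeometry Complex
open scoped RealInnerProductSpace

section PathLength

variable {E F : Type*} [NormedAddCommGroup E] [NormedSpace ℝ E]
  [NormedAddCommGroup F] [NormedSpace ℝ F] {γ : ℝ → E} {a b : ℝ}

theorem PiecewiseC1On.of_contDiff (hγ : ContDiff ℝ 1 γ) (hab : a ≤ b) : PiecewiseC1On γ a b :=
  ⟨1, fun i => if i = 0 then a else b, by simp, by simp, by simpa using hab,
    fun _ _ => hγ.contDiffOn⟩

theorem hasDerivAt_deriv_of_contDiffOn_Icc (hγ : ContDiffOn ℝ 1 γ (Icc a b)) {t : ℝ}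
    (ht : t ∈ Ioo a b) : HasDerivAt γ (deriv γ t) t :=
  ((hγ.differentiableOn one_ne_zero).differentiableAt (Icc_mem_nhds ht.1 ht.2)).hasDerivAt

theorem intervalIntegrable_norm_deriv_of_contDiffOn (hab : a ≤ b)
    (hγ : ContDiffOn ℝ 1 γ (Icc a b)) :
    IntervalIntegrable (fun t => ‖deriv γ t‖) volume a b := by
  obtain rfl | hlt := hab.eq_or_lt
  · simp
  have hcont : ContinuousOn (fun t => ‖derivWithin γ (Icc a b) t‖) (uIcc a b) := by
    rw [uIcc_of_le hab]
    exact (hγ.continuousOn_derivWithin (uniqueDiffOn_Icc hlt) le_rfl).norm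
  refine hcont.intervalIntegrable.congr_uIoo fun t ht => ?_
  rw [uIoo_of_le hab] at ht
  simp only [derivWithin_of_mem_nhds (Icc_mem_nhds ht.1 ht.2)]

theorem pathLength_nonneg (γ : ℝ → E) (hab : a ≤ b) : 0 ≤ pathLength γ a b :=
  intervalIntegral.integral_nonneg hab fun _ _ => norm_nonneg _

theorem pathLength_clm_comp_le_of_contDiffOn (hab : a ≤ b) (hγ : ContDiffOn ℝ 1 γ (Icc a b))
    (L : E →L[ℝ] F) : pathLength (fun t => L (γ t)) a b ≤ ‖L‖ * pathLength γ a b := by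
  unfold pathLength
  rw [← intervalIntegral.integral_const_mul]
  refine intervalIntegral.integral_mono_on_of_le_Ioo hab
    (intervalIntegrable_norm_deriv_of_contDiffOn hab (hγ.continuousLinearMap_comp L))
    ((intervalIntegrable_norm_deriv_of_contDiffOn hab hγ).const_mul _) fun t ht => ?_
  have hderiv : HasDerivAt (fun s => L (γ s)) (L (deriv γ t)) t :=
    L.hasFDerivAt.comp_hasDerivAt t (hasDerivAt_deriv_of_contDiffOn_Icc hγ ht)
  rw [hderiv.deriv]
  exact L.le_opNorm _

theorem PiecewiseC1On.le_pathLength_of_forall_contDiffOn (hγ : PiecewiseC1On γ a b)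
    {d : ℝ → ℝ → ℝ} (d_self : d a a ≤ 0) (d_triangle : ∀ r s t, d r t ≤ d r s + d s t)
    (d_le : ∀ s t, s ≤ t → Icc s t ⊆ Icc a b → ContDiffOn ℝ 1 γ (Icc s t) →
      d s t ≤ pathLength γ s t) :
    d a b ≤ pathLength γ a b := by
  obtain ⟨n, τ, rfl, rfl, hτ, hC⟩ := hγ
  have hmono : MonotoneOn τ (Iic n) :=
    monotoneOn_of_le_succ ordConnected_Iic fun i _ _ hi => hτ i hi
  have hint : ∀ i < n, IntervalIntegrable (fun t => ‖deriv γ t‖) volume (τ i) (τ (i + 1)) :=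
    fun i hi => intervalIntegrable_norm_deriv_of_contDiffOn (hτ i hi) (hC i hi)
  have hd : ∀ i ≤ n, d (τ 0) (τ i) ≤ pathLength γ (τ 0) (τ i) := by
    intro i hi
    induction i with
    | zero => simpa [pathLength] using d_self
    | succ k ih =>
      have hsub : Icc (τ k) (τ (k + 1)) ⊆ Icc (τ 0) (τ n) :=
        Icc_subset_Icc (hmono (mem_Iic.2 zero_le) (mem_Iic.2 (by omega)) zero_le)
          (hmono hi (mem_Iic.2 le_rfl) hi)
      calc d (τ 0) (τ (k + 1)) ≤ d (τ 0) (τ k) + d (τ k) (τ (k + 1)) := d_triangle _ _ _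
        _ ≤ pathLength γ (τ 0) (τ k) + pathLength γ (τ k) (τ (k + 1)) :=
          add_le_add (ih (by omega)) (d_le _ _ (hτ k hi) hsub (hC k hi))
        _ = pathLength γ (τ 0) (τ (k + 1)) :=
          intervalIntegral.integral_add_adjacent_intervals
            (IntervalIntegrable.trans_iterate fun j hj => hint j (by omega)) (hint k hi)
  exact hd n le_rfl

end PathLength

section Sphere

variable {V : Type*} [NormedAddCommGroup V] [InnerProductSpace ℝ V]

theorem inner_eq_zero_of_norm_eventually_const {y : ℝ → V} {y' : V} {t r : ℝ}
    (hy : HasDerivAt y y' t) (hr : ∀ᶠ s in 𝓝 t, ‖y s‖ = r) : ⟪y t, y'⟫ = 0 := by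
  have hsq : (fun s => ‖y s‖ ^ 2) =ᶠ[𝓝 t] fun _ => r ^ 2 := hr.mono fun s hs => by simp only [hs]
  have h := hy.norm_sq.unique ((hasDerivAt_const t (r ^ 2)).congr_of_eventuallyEq hsq)
  linarith

theorem abs_inner_le_one {p y : V} (hp : ‖p‖ = 1) (hy : ‖y‖ = 1) : |⟪p, y⟫| ≤ 1 := by
  simpa [hp, hy] using abs_real_inner_le_norm p y

theorem abs_inner_le_sqrt_one_sub_sq_mul_norm {p y w : V} (hp : ‖p‖ = 1) (hy : ‖y‖ = 1)
    (hyw : ⟪y, w⟫ = 0) : |⟪p, w⟫| ≤ √(1 - ⟪p, y⟫ ^ 2) * ‖w‖ := by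
  have hproj : ⟪p, w⟫ = ⟪p - ⟪p, y⟫ • y, w⟫ := by
    rw [inner_sub_left, real_inner_smul_left, hyw, mul_zero, sub_zero]
  have hnorm : ‖p - ⟪p, y⟫ • y‖ ^ 2 = 1 - ⟪p, y⟫ ^ 2 := by
    rw [norm_sub_sq_real, real_inner_smul_right, norm_smul, mul_pow, Real.norm_eq_abs, sq_abs,
      hp, hy]
    ring
  rw [hproj, ← hnorm, Real.sqrt_sq (norm_nonneg _)]
  exact abs_real_inner_le_norm _ _

theorem abs_mul_div_sqrt_one_sub_sq_le {c f f' l : ℝ} (hc₀ : 0 ≤ c) (hc₁ : c < 1) (hf : |f| ≤ 1)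
    (hf' : |f'| ≤ √(1 - f ^ 2) * l) (hl : 0 ≤ l) : |c * f'| / √(1 - (c * f) ^ 2) ≤ l := by
  have hf_sq : f ^ 2 ≤ 1 := (sq_le_one_iff_abs_le_one f).2 hf
  have hc_sq : c ^ 2 < 1 := (sq_lt_one_iff₀ hc₀).2 hc₁
  have hcf_sq : (c * f) ^ 2 ≤ f ^ 2 := by
    rw [mul_pow]
    exact mul_le_of_le_one_left (sq_nonneg f) hc_sq.le
  have hcf_lt : (c * f) ^ 2 < 1 := by
    rw [mul_pow]
    exact (mul_le_of_le_one_right (sq_nonneg c) hf_sq).trans_lt hc_sq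
  rw [div_le_iff₀ (Real.sqrt_pos.2 (sub_pos.2 hcf_lt))]
  calc |c * f'| = c * |f'| := by rw [abs_mul, abs_of_nonneg hc₀]
    _ ≤ |f'| := mul_le_of_le_one_left (abs_nonneg _) hc₁.le
    _ ≤ √(1 - f ^ 2) * l := hf'
    _ ≤ √(1 - (c * f) ^ 2) * l := by gcongr
    _ = l * √(1 - (c * f) ^ 2) := mul_comm _ _

variable {y : ℝ → V} {a b : ℝ}

theorem hasDerivAt_arccos_mul_inner {p y' : V} {t c : ℝ} (hp : ‖p‖ = 1) (hyt : ‖y t‖ = 1)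
    (hy : HasDerivAt y y' t) (hc₀ : 0 ≤ c) (hc₁ : c < 1) :
    HasDerivAt (fun s => Real.arccos (c * ⟪p, y s⟫))
      (-(1 / √(1 - (c * ⟪p, y t⟫) ^ 2)) * (c * ⟪p, y'⟫)) t := by
  have hlt : |c * ⟪p, y t⟫| < 1 := by
    rw [abs_mul, abs_of_nonneg hc₀]
    exact (mul_le_of_le_one_right hc₀ (abs_inner_le_one hp hyt)).trans_lt hc₁
  have hinner : HasDerivAt (fun s => ⟪p, y s⟫) ⟪p, y'⟫ t := by
    simpa using (hasDerivAt_const t p).inner ℝ hy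
  exact HasDerivAt.comp (h₂ := Real.arccos) t
    (Real.hasDerivAt_arccos (abs_lt.1 hlt).1.ne' (abs_lt.1 hlt).2.ne) (hinner.const_mul c)

theorem arccos_mul_inner_sub_arccos_le_pathLength {p : V} (hp : ‖p‖ = 1) (hab : a ≤ b)
    (hy : ContDiffOn ℝ 1 y (Icc a b)) (hy₁ : ∀ t ∈ Icc a b, ‖y t‖ = 1) {c : ℝ}
    (hc₀ : 0 ≤ c) (hc₁ : c < 1) :
    Real.arccos (c * ⟪p, y b⟫) - Real.arccos (c * ⟪p, y a⟫) ≤ pathLength y a b := by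
  have hderiv : ∀ t ∈ Ioo a b, HasDerivAt (fun s => Real.arccos (c * ⟪p, y s⟫))
      (-(1 / √(1 - (c * ⟪p, y t⟫) ^ 2)) * (c * ⟪p, deriv y t⟫)) t := fun t ht =>
    hasDerivAt_arccos_mul_inner hp (hy₁ t (Ioo_subset_Icc_self ht))
      (hasDerivAt_deriv_of_contDiffOn_Icc hy ht) hc₀ hc₁
  refine intervalIntegral.sub_le_integral_of_hasDeriv_right_of_le hab ?_
    (fun t ht => (hderiv t ht).hasDerivWithinAt)
    ((intervalIntegrable_iff_integrableOn_Icc_of_le hab).1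
      (intervalIntegrable_norm_deriv_of_contDiffOn hab hy)) fun t ht => ?_
  · exact Real.continuous_arccos.comp_continuousOn
      (continuousOn_const.mul (continuousOn_const.inner hy.continuousOn))
  · have horth : ⟪y t, deriv y t⟫ = 0 :=
      inner_eq_zero_of_norm_eventually_const (hasDerivAt_deriv_of_contDiffOn_Icc hy ht)
        (mem_of_superset (Icc_mem_nhds ht.1 ht.2) hy₁)
    have hyt : ‖y t‖ = 1 := hy₁ t (Ioo_subset_Icc_self ht)
    calc -(1 / √(1 - (c * ⟪p, y t⟫) ^ 2)) * (c * ⟪p, deriv y t⟫)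
        = -(c * ⟪p, deriv y t⟫) / √(1 - (c * ⟪p, y t⟫) ^ 2) := by ring
      _ ≤ |c * ⟪p, deriv y t⟫| / √(1 - (c * ⟪p, y t⟫) ^ 2) := by
        gcongr
        exact neg_le_abs _
      _ ≤ ‖deriv y t‖ := abs_mul_div_sqrt_one_sub_sq_le hc₀ hc₁ (abs_inner_le_one hp hyt)
        (abs_inner_le_sqrt_one_sub_sq_mul_norm hp hyt horth) (norm_nonneg _)

theorem angle_le_pathLength_of_contDiffOn (hab : a ≤ b) (hy : ContDiffOn ℝ 1 y (Icc a b))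
    (hy₁ : ∀ t ∈ Icc a b, ‖y t‖ = 1) : angle (y a) (y b) ≤ pathLength y a b := by
  have hya : ‖y a‖ = 1 := hy₁ a (left_mem_Icc.2 hab)
  have hyb : ‖y b‖ = 1 := hy₁ b (right_mem_Icc.2 hab)
  -- `arccos` is not differentiable at `±1`, so the inner products are first scaled by `c < 1`.
  have hlim : Tendsto (fun c : ℝ => Real.arccos (c * ⟪y a, y b⟫) - Real.arccos (c * ⟪y a, y a⟫))
      (𝓝[<] 1) (𝓝 (Real.arccos (1 * ⟪y a, y b⟫) - Real.arccos (1 * ⟪y a, y a⟫))) :=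
    (Continuous.tendsto (by fun_prop) 1).mono_left nhdsWithin_le_nhds
  have hle := le_of_tendsto hlim <| mem_of_superset (Ico_mem_nhdsLT zero_lt_one) fun c hc =>
    arccos_mul_inner_sub_arccos_le_pathLength hya hab hy hy₁ hc.1 hc.2
  simpa [angle, hya, hyb] using hle

theorem angle_clm_apply_le_pathLength {E : Type*} [NormedAddCommGroup E] [NormedSpace ℝ E]
    {γ : ℝ → E} (hab : a ≤ b) (hγ : PiecewiseC1On γ a b) {L : E →L[ℝ] V} (hL : ‖L‖ ≤ 1)
    (hLγ : ∀ t ∈ Icc a b, ‖L (γ t)‖ = 1) : angle (L (γ a)) (L (γ b)) ≤ pathLength γ a b := by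
  have hne : L (γ a) ≠ 0 := norm_ne_zero_iff.1 <| by
    rw [hLγ a (left_mem_Icc.2 hab)]
    exact one_ne_zero
  refine hγ.le_pathLength_of_forall_contDiffOn (d := fun s t => angle (L (γ s)) (L (γ t)))
    (angle_self hne).le (fun _ _ _ => angle_le_angle_add_angle _ _ _) fun s t hst hsub hC => ?_
  calc angle (L (γ s)) (L (γ t)) ≤ pathLength (fun r => L (γ r)) s t :=
        angle_le_pathLength_of_contDiffOn (y := fun r => L (γ r)) hst
          (hC.continuousLinearMap_comp L) fun r hr => hLγ r (hsub hr)
    _ ≤ ‖L‖ * pathLength γ s t := pathLength_clm_comp_le_of_contDiffOn hst hC L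
    _ ≤ pathLength γ s t := mul_le_of_le_one_left (pathLength_nonneg γ hst) hL

end Sphere

section ComplexHilbert

variable {H K : Type*} [NormedAddCommGroup H] [NormedSpace ℂ H]
  [NormedAddCommGroup K] [InnerProductSpace ℂ K]

attribute [local instance] InnerProductSpace.complexToReal

theorem angle_smul_self_eq_abs_arg {x : K} (hx : x ≠ 0) {z : ℂ} (hz : z ≠ 0) :
    angle x (z • x) = |z.arg| := by
  refine Real.arccos_eq_of_eq_cos (abs_nonneg _) (abs_arg_le_pi z) ?_
  have hinner : ⟪x, z • x⟫ = z.re * ‖x‖ ^ 2 := by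
    change (inner ℂ x (z • x)).re = _
    rw [inner_smul_right, inner_self_eq_norm_sq_to_K]
    norm_cast
    exact re_mul_ofReal _ _
  have hnorm : ‖x‖ ≠ 0 := norm_ne_zero_iff.2 hx
  rw [Real.cos_abs, cos_arg hz, hinner, norm_smul]
  field_simp

theorem abs_arg_le_pathLength_of_apply_eq_smul {γ : ℝ → H →L[ℂ] K} {a b : ℝ} (hab : a ≤ b)
    (hγ : PiecewiseC1On γ a b) {x : H} (hx : ‖x‖ = 1) (hγx : ∀ t ∈ Icc a b, ‖γ t x‖ = 1)
    {z : ℂ} (hz : γ b x = z • γ a x) : |z.arg| ≤ pathLength γ a b := by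
  let L : (H →L[ℂ] K) →L[ℝ] K := (ContinuousLinearMap.apply ℂ K x).restrictScalars ℝ
  have hL : ‖L‖ ≤ 1 := L.opNorm_le_bound zero_le_one fun A => by
    simpa [L, hx] using A.le_opNorm x
  have hγa : γ a x ≠ 0 := norm_ne_zero_iff.1 <| by
    rw [hγx a (left_mem_Icc.2 hab)]
    exact one_ne_zero
  have hz₀ : z ≠ 0 := by
    rintro rfl
    simpa [hz] using hγx b (right_mem_Icc.2 hab)
  rw [← angle_smul_self_eq_abs_arg hγa hz₀, ← hz]
  exact angle_clm_apply_le_pathLength (L := L) hab hγ hL hγx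

end ComplexHilbert

section UnitaryGeodesic

variable {A : Type*} [CStarAlgebra A]

/-- The one-parameter curve `t ↦ u exp(i t x)` of unitaries through `u` with self-adjoint
generator `x`; it realises the geodesic distance when `x` is a principal logarithm. -/
noncomputable def unitaryGeodesic (u : unitary A) (x : selfAdjoint A) (t : ℝ) : unitary A :=
  u * selfAdjoint.expUnitary (t • x)

theorem unitaryGeodesic_zero (u : unitary A) (x : selfAdjoint A) : unitaryGeodesic u x 0 = u := by
  simp [unitaryGeodesic]

theorem unitaryGeodesic_one (u : unitary A) (x : selfAdjoint A) :
    unitaryGeodesic u x 1 = u * selfAdjoint.expUnitary x := by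
  simp [unitaryGeodesic]

theorem hasDerivAt_unitaryGeodesic (u : unitary A) (x : selfAdjoint A) (t : ℝ) :
    HasDerivAt (fun s => (unitaryGeodesic u x s : A))
      (unitaryGeodesic u x t * (I • (x : A))) t := by
  have hexp := (hasDerivAt_exp_smul_const (I • (x : A)) t).const_mul (u : A)
  simpa [unitaryGeodesic, mul_assoc, smul_comm I] using hexp

theorem contDiff_unitaryGeodesic (u : unitary A) (x : selfAdjoint A) :
    ContDiff ℝ 1 fun t => (unitaryGeodesic u x t : A) := by
  have hcont : Continuous fun t => (unitaryGeodesic u x t : A) :=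
    continuous_iff_continuousAt.2 fun t => (hasDerivAt_unitaryGeodesic u x t).continuousAt
  refine contDiff_one_iff_deriv.2
    ⟨fun t => (hasDerivAt_unitaryGeodesic u x t).differentiableAt, ?_⟩
  rw [funext fun t => (hasDerivAt_unitaryGeodesic u x t).deriv]
  exact hcont.mul continuous_const

theorem pathLength_unitaryGeodesic (u : unitary A) (x : selfAdjoint A) (a b : ℝ) :
    pathLength (fun t => (unitaryGeodesic u x t : A)) a b = (b - a) * ‖x‖ := by
  have hspeed (t : ℝ) : ‖deriv (fun s => (unitaryGeodesic u x s : A)) t‖ = ‖x‖ := by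
    rw [(hasDerivAt_unitaryGeodesic u x t).deriv, CStarRing.norm_coe_unitary_mul, norm_smul,
      norm_I, one_mul, AddSubgroup.coe_norm]
  simp [pathLength, hspeed]

theorem norm_argSelfAdjoint_le {u : unitary A} {c : ℝ} (hc : 0 ≤ c)
    (h : ∀ z ∈ spectrum ℂ (u : A), |z.arg| ≤ c) : ‖Unitary.argSelfAdjoint u‖ ≤ c :=
  norm_cfc_le hc fun z hz => by simpa using h z hz

theorem exp_I_mul_arg_of_norm_eq_one {z : ℂ} (hz : ‖z‖ = 1) : exp (I * z.arg) = z := by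
  simpa [hz, mul_comm I] using norm_mul_exp_arg_mul_I z

theorem expUnitary_argSelfAdjoint_of_continuousOn {u : unitary A}
    (harg : ContinuousOn arg (spectrum ℂ (u : A))) :
    selfAdjoint.expUnitary (Unitary.argSelfAdjoint u) = u := by
  apply Subtype.ext
  calc (selfAdjoint.expUnitary (Unitary.argSelfAdjoint u) : A)
      = cfc (fun z : ℂ => NormedSpace.exp (I • (z.arg : ℂ))) (u : A) := by
        rw [selfAdjoint.expUnitary_coe, Unitary.argSelfAdjoint_coe, cfc_comp' .., cfc_smul ..,
          CFC.exp_eq_normedSpace_exp ..]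
    _ = cfc id (u : A) := cfc_congr fun z hz => by
        rw [← exp_eq_exp_ℂ]
        exact exp_I_mul_arg_of_norm_eq_one (spectrum.norm_eq_one_of_unitary u.2 hz)
    _ = u := cfc_id ℂ (u : A)

end UnitaryGeodesic

section GeoDist

variable {N : ℕ}

theorem mem_eigenvalueMultiset_iff_hasEigenvalue {w : Op N} {z : ℂ} :
    z ∈ eigenvalueMultiset N w ↔ Module.End.HasEigenvalue (w : Hsp N →ₗ[ℂ] Hsp N) z := by
  rw [eigenvalueMultiset, Polynomial.mem_roots (LinearMap.charpoly_monic _).ne_zero,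
    Module.End.hasEigenvalue_iff_isRoot_charpoly]

theorem mem_eigenvalueMultiset_iff_mem_spectrum {w : Op N} {z : ℂ} :
    z ∈ eigenvalueMultiset N w ↔ z ∈ spectrum ℂ w := by
  rw [mem_eigenvalueMultiset_iff_hasEigenvalue, Module.End.hasEigenvalue_iff_mem_spectrum,
    ContinuousLinearMap.spectrum_eq]

theorem exists_norm_eq_one_of_mem_eigenvalueMultiset {w : Op N} {z : ℂ}
    (hz : z ∈ eigenvalueMultiset N w) : ∃ x : Hsp N, ‖x‖ = 1 ∧ w x = z • x := by
  have : Nontrivial (Module.End.eigenspace (w : Hsp N →ₗ[ℂ] Hsp N) z) :=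
    Submodule.nontrivial_iff_ne_bot.2 (mem_eigenvalueMultiset_iff_hasEigenvalue.1 hz)
  obtain ⟨⟨x, hxz⟩, hx⟩ :=
    exists_norm_eq (Module.End.eigenspace (w : Hsp N →ₗ[ℂ] Hsp N) z) zero_le_one
  exact ⟨x, hx, Module.End.mem_eigenspace_iff.1 hxz⟩

theorem expUnitary_argSelfAdjoint_eq (w : unitary (Op N)) :
    selfAdjoint.expUnitary (Unitary.argSelfAdjoint w) = w := by
  have hfin : (spectrum ℂ (w : Op N)).Finite := by
    rw [ContinuousLinearMap.spectrum_eq]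
    exact Module.End.finite_spectrum _
  exact expUnitary_argSelfAdjoint_of_continuousOn (hfin.continuousOn _)

theorem exists_piecewiseC1On_unitary_pathLength_eq (u v : unitary (Op N)) :
    ∃ (a b : ℝ) (γ : ℝ → Op N), a ≤ b ∧ PiecewiseC1On γ a b ∧
      (∀ t ∈ Icc a b, γ t ∈ unitary (Op N)) ∧ γ a = u ∧ γ b = v ∧
      ‖Unitary.argSelfAdjoint (u⁻¹ * v)‖ = pathLength γ a b := by
  refine ⟨0, 1, fun t => unitaryGeodesic u (Unitary.argSelfAdjoint (u⁻¹ * v)) t, zero_le_one,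
    .of_contDiff (contDiff_unitaryGeodesic u _) zero_le_one, fun t _ => SetLike.coe_mem _, ?_, ?_,
    ?_⟩
  · simp only [unitaryGeodesic_zero]
  · simp only [unitaryGeodesic_one, expUnitary_argSelfAdjoint_eq, mul_inv_cancel_left]
  · rw [pathLength_unitaryGeodesic, sub_zero, one_mul]

theorem geoDist_le_norm_argSelfAdjoint (u v : unitary (Op N)) :
    geoDist N u v ≤ ‖Unitary.argSelfAdjoint (u⁻¹ * v)‖ := by
  refine csInf_le ⟨0, ?_⟩ (exists_piecewiseC1On_unitary_pathLength_eq u v)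
  rintro _ ⟨a, b, γ, hab, -, -, -, -, rfl⟩
  exact pathLength_nonneg γ hab

theorem abs_arg_le_geoDist {u v : unitary (Op N)} {z : ℂ}
    (hz : z ∈ eigenvalueMultiset N ↑(u⁻¹ * v)) : |z.arg| ≤ geoDist N u v := by
  obtain ⟨x, hx, hxz⟩ := exists_norm_eq_one_of_mem_eigenvalueMultiset hz
  have hvx : (v : Op N) x = z • (u : Op N) x := by
    rw [← map_smul, ← hxz, ← mul_apply_eq_comp, ← Submonoid.coe_mul, mul_inv_cancel_left]
  refine le_csInf ⟨_, exists_piecewiseC1On_unitary_pathLength_eq u v⟩ ?_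
  rintro _ ⟨a, b, γ, hab, hγ, hU, hγa, hγb, rfl⟩
  refine abs_arg_le_pathLength_of_apply_eq_smul hab hγ hx (fun t ht => ?_) (by rw [hγa, hγb, hvx])
  rw [ContinuousLinearMap.norm_map_of_mem_unitary (hU t ht), hx]

end GeoDist

/-- For any `u, v ∈ U(H)`, the geodesic distance equals
`max_i |arg λ_i|` where `λ_1, …, λ_N` are the eigenvalues (with multiplicity)
of `u⁻¹ v` and `arg` is the principal argument valued in `(-π, π]`. -/
theorem geoDist_eq_max_abs_arg_eigenvalues (N : ℕ) (hN : 1 ≤ N)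
    (u v : unitary (Op N)) (lam : Fin N → ℂ)
    (hlam : eigenvalueMultiset N ↑(u⁻¹ * v) = Multiset.map lam Finset.univ.val) :
    geoDist N ↑u ↑v = ⨆ i, |Complex.arg (lam i)| := by
  have : Nonempty (Fin N) := ⟨⟨0, hN⟩⟩
  have hmem {z : ℂ} : z ∈ eigenvalueMultiset N ↑(u⁻¹ * v) ↔ ∃ i, lam i = z := by
    rw [hlam]
    simp
  apply le_antisymm
  · refine (geoDist_le_norm_argSelfAdjoint u v).trans <|
      norm_argSelfAdjoint_le (Real.iSup_nonneg fun _ => abs_nonneg _) fun z hz => ?_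
    obtain ⟨i, rfl⟩ := hmem.1 (mem_eigenvalueMultiset_iff_mem_spectrum.2 hz)
    exact le_ciSup (f := fun i => |arg (lam i)|) (finite_range _).bddAbove i
  · exact ciSup_le fun i => abs_arg_le_geoDist (hmem.2 ⟨i, rfl⟩)
end

section
/- The distance d̃ on Ũ(H) is non-degenerate: if d̃((u,φ), (v,ψ)) = 0 then u = v and φ = ψ. -/
/-!
Two facts drive the proof. A curve of length `ℓ` starting at `u` stays in the ball of radius `ℓ`
about `u`, so `‖v - u‖` is at most the distance. If moreover `ℓ` is small, then `det` avoids the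
antipode `-det u` along the curve, so the phase, which is a continuous lift of `det`, moves by less
than `π`; as `e^{iφ} = det u = det v = e^{iψ}`, the two phases agree.

A vanishing infimum produces short curves only if there is some curve at all. With
`star u * v = exp (iA)`, `A` self-adjoint, the curve `u * exp (itA)` reaches `v` with a phase which
is off by some `2πk`. The factor `exp (itB)`, `B` being `2πk` times a rank-one projection, corrects
this: it is a loop at `1` along which the phase increases by `2πk`.
-/

open Complex MeasureTheory Set selfAdjoint
open scoped Real

section SmoothCurve

variable {E : Type*} [NormedAddCommGroup E] [NormedSpace ℝ E] {γ : ℝ → E} {a b : ℝ}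

theorem intervalIntegrable_deriv_of_contDiffOn_Icc (h : ContDiffOn ℝ 1 γ (Icc a b))
    (hab : a ≤ b) : IntervalIntegrable (deriv γ) volume a b := by
  rcases hab.eq_or_lt with rfl | hlt
  · exact IntervalIntegrable.refl
  have hcont : ContinuousOn (derivWithin γ (Icc a b)) (uIcc a b) := by
    rw [uIcc_of_le hab]
    exact h.continuousOn_derivWithin (uniqueDiffOn_Icc hlt) le_rfl
  refine hcont.intervalIntegrable.congr_ae ?_
  rw [uIoc_of_le hab, ← restrict_Ioo_eq_restrict_Ioc]
  filter_upwards [self_mem_ae_restrict measurableSet_Ioo] with x hx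
  exact derivWithin_of_mem_nhds (Icc_mem_nhds hx.1 hx.2)

theorem norm_sub_le_pathLength_of_contDiffOn_Icc (h : ContDiffOn ℝ 1 γ (Icc a b)) (hab : a ≤ b) :
    ‖γ b - γ a‖ ≤ pathLength γ a b :=
  norm_sub_le_integral_of_norm_deriv_le_of_le hab h.continuousOn
    ((h.differentiableOn one_ne_zero).mono Ioo_subset_Icc_self) (ae_of_all _ fun _ _ => le_rfl)
    (intervalIntegrable_deriv_of_contDiffOn_Icc h hab).norm

end SmoothCurve

namespace PiecewiseC1On

variable {E F : Type*} [NormedAddCommGroup E] [NormedSpace ℝ E] [NormedAddCommGroup F]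
  [NormedSpace ℝ F] {γ : ℝ → E} {a b : ℝ}

theorem of_contDiff_s7 (hγ : ContDiff ℝ 1 γ) (hab : a ≤ b) : PiecewiseC1On γ a b :=
  ⟨1, fun i => if i = 0 then a else b, by simp, by simp, by simpa using hab,
    fun _ _ => hγ.contDiffOn⟩

theorem contDiff_comp {g : E → F} (hg : ContDiff ℝ 1 g) (h : PiecewiseC1On γ a b) :
    PiecewiseC1On (g ∘ γ) a b := by
  obtain ⟨n, τ, hτa, hτb, hτ, hγ⟩ := h
  exact ⟨n, τ, hτa, hτb, hτ, fun i hi => hg.comp_contDiffOn (hγ i hi)⟩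

theorem induction_right {P : ℝ → Prop} (h : PiecewiseC1On γ a b) (refl : P a)
    (append : ∀ c d, PiecewiseC1On γ a c → c ≤ d → ContDiffOn ℝ 1 γ (Icc c d) → P c → P d) :
    P b := by
  obtain ⟨n, τ, rfl, rfl, hτ, hγ⟩ := h
  suffices ∀ m ≤ n, P (τ m) from this n le_rfl
  intro m
  induction m with
  | zero => exact fun _ => refl
  | succ m ih =>
    intro hm
    have hinit : PiecewiseC1On γ (τ 0) (τ m) :=
      ⟨m, τ, rfl, rfl, fun i hi => hτ i (by omega), fun i hi => hγ i (by omega)⟩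
    exact append _ _ hinit (hτ m hm) (hγ m hm) (ih (by omega))

theorem le (h : PiecewiseC1On γ a b) : a ≤ b :=
  h.induction_right le_rfl fun _ _ _ hcd _ hac => hac.trans hcd

theorem continuousOn (h : PiecewiseC1On γ a b) : ContinuousOn γ (Icc a b) := by
  refine h.induction_right (P := fun b => ContinuousOn γ (Icc a b)) (by simp) ?_
  intro c d hac hcd hγ ih
  rw [← Icc_union_Icc_eq_Icc hac.le hcd]
  exact ih.union_of_isClosed hγ.continuousOn isClosed_Icc isClosed_Icc

theorem intervalIntegrable_deriv (h : PiecewiseC1On γ a b) :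
    IntervalIntegrable (deriv γ) volume a b :=
  h.induction_right IntervalIntegrable.refl fun _ _ _ hcd hγ ih =>
    ih.trans (intervalIntegrable_deriv_of_contDiffOn_Icc hγ hcd)

theorem pathLength_le (h : PiecewiseC1On γ a b) {t : ℝ} (ht : t ∈ Icc a b) :
    pathLength γ a t ≤ pathLength γ a b :=
  intervalIntegral.integral_mono_interval le_rfl ht.1 ht.2
    (ae_of_all _ fun _ => norm_nonneg _) h.intervalIntegrable_deriv.norm

theorem norm_sub_le_pathLength_of_mem (h : PiecewiseC1On γ a b) :
    ∀ t ∈ Icc a b, ‖γ t - γ a‖ ≤ pathLength γ a t := by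
  refine h.induction_right (P := fun b => ∀ t ∈ Icc a b, ‖γ t - γ a‖ ≤ pathLength γ a t)
    (by simp [pathLength]) ?_
  intro c d hac _ hγ ih t ht
  rcases le_total t c with htc | hct
  · exact ih t ⟨ht.1, htc⟩
  have hγt : ContDiffOn ℝ 1 γ (Icc c t) := hγ.mono (Icc_subset_Icc_right ht.2)
  calc ‖γ t - γ a‖ ≤ ‖γ c - γ a‖ + ‖γ t - γ c‖ := by
        rw [add_comm]; exact norm_sub_le_norm_sub_add_norm_sub _ _ _
    _ ≤ pathLength γ a c + pathLength γ c t :=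
        add_le_add (ih c ⟨hac.le, le_rfl⟩) (norm_sub_le_pathLength_of_contDiffOn_Icc hγt hct)
    _ = pathLength γ a t :=
        intervalIntegral.integral_add_adjacent_intervals hac.intervalIntegrable_deriv.norm
          (intervalIntegrable_deriv_of_contDiffOn_Icc hγt hct).norm

theorem norm_sub_le_pathLength (h : PiecewiseC1On γ a b) {t : ℝ} (ht : t ∈ Icc a b) :
    ‖γ t - γ a‖ ≤ pathLength γ a b :=
  (h.norm_sub_le_pathLength_of_mem t ht).trans (h.pathLength_le ht)

end PiecewiseC1On

section Phase

theorem abs_sub_lt_pi_of_forall_exp_ne_neg {X : Type*} [TopologicalSpace X] {s : Set X}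
    {f : X → ℝ} {x y : X} (hs : IsPreconnected s) (hf : ContinuousOn f s) (hx : x ∈ s) (hy : y ∈ s)
    (h : ∀ z ∈ s, cexp (f z * I) ≠ -cexp (f x * I)) : |f y - f x| < π := by
  have avoid : ∀ c ∈ f '' s, cexp (c * I) ≠ -cexp (f x * I) := by
    rintro _ ⟨z, hz, rfl⟩
    exact h z hz
  have image_ordConnected : (f '' s).OrdConnected := (hs.image f hf).ordConnected
  have hfx : f x ∈ f '' s := mem_image_of_mem f hx
  have hfy : f y ∈ f '' s := mem_image_of_mem f hy
  rw [abs_lt]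
  constructor <;> by_contra! hle
  · refine avoid (f x - π) (image_ordConnected.out hfy hfx ⟨?_, ?_⟩) ?_
    · linarith
    · linarith [Real.pi_pos]
    · simp [sub_mul, exp_sub, exp_pi_mul_I, div_neg]
  · refine avoid (f x + π) (image_ordConnected.out hfx hfy ⟨?_, ?_⟩) ?_
    · linarith [Real.pi_pos]
    · linarith
    · simp [add_mul, exp_add, exp_pi_mul_I]

theorem eq_of_exp_mul_I_eq_of_abs_sub_lt_pi {x y : ℝ} (h : cexp (x * I) = cexp (y * I))
    (hxy : |y - x| < π) : x = y := by
  have hexp : cexp ((y - x : ℝ) * I) = cexp 0 := by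
    rw [ofReal_sub, sub_mul, exp_sub, ← h, div_self (exp_ne_zero _), Complex.exp_zero]
  have hzero : ((y - x : ℝ) : ℂ) * I = 0 := by
    obtain ⟨hlo, hhi⟩ := abs_lt.1 hxy
    apply exp_inj_of_neg_pi_lt_of_le_pi _ _ _ _ hexp
    · simpa using hlo
    · simpa using hhi.le
    · simpa using Real.pi_pos
    · simpa using Real.pi_pos.le
  have : y - x = 0 := by simpa [I_ne_zero, -ofReal_sub] using hzero
  linarith

theorem exists_int_mul_two_pi_eq_sub_of_exp_mul_I_eq {x y : ℝ}
    (h : cexp (x * I) = cexp (y * I)) : ∃ k : ℤ, x - y = k * (2 * π) := by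
  obtain ⟨k, hk⟩ := exp_eq_exp_iff_exists_int.1 h
  refine ⟨k, ?_⟩
  have : (x : ℂ) = y + k * (2 * π) := mul_right_cancel₀ I_ne_zero (by rw [hk]; ring)
  rw [sub_eq_iff_eq_add']
  exact_mod_cast this

end Phase

section Exponential

theorem expUnitary_argSelfAdjoint_of_continuousOn_s7 {R : Type*} [CStarAlgebra R] {u : unitary R}
    (hu : ContinuousOn arg (spectrum ℂ (u : R))) : expUnitary (Unitary.argSelfAdjoint u) = u := by
  have exp_arg : ∀ z ∈ spectrum ℂ (u : R), NormedSpace.exp (I • (arg z : ℂ)) = z := by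
    intro z hz
    rw [← exp_eq_exp_ℂ, smul_eq_mul, mul_comm]
    simpa [spectrum.norm_eq_one_of_unitary u.2 hz] using norm_mul_exp_arg_mul_I z
  ext
  calc NormedSpace.exp (I • cfc (fun z => (arg z : ℂ)) (u : R))
      = cfc (fun z => NormedSpace.exp (I • (arg z : ℂ))) (u : R) := by
        rw [← cfc_smul .., ← CFC.exp_eq_normedSpace_exp (𝕜 := ℂ), ← cfc_comp' ..]
    _ = cfc id (u : R) := cfc_congr exp_arg
    _ = u := cfc_id ℂ (u : R)

theorem exp_apply_of_apply_eq_smul {𝕜 E : Type*} [RCLike 𝕜] [NormedAddCommGroup E]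
    [NormedSpace 𝕜 E] [CompleteSpace E] {T : E →L[𝕜] E} {μ : 𝕜} {x : E} (h : T x = μ • x) :
    NormedSpace.exp T x = NormedSpace.exp μ • x := by
  have pow_apply : ∀ n : ℕ, (T ^ n) x = μ ^ n • x := by
    intro n
    induction n with
    | zero => simp
    | succ n ih => rw [pow_succ, mul_apply_eq_comp, h, map_smul, ih, smul_smul, pow_succ']
  have hasSum_apply := (NormedSpace.exp_series_hasSum_exp' (𝕂 := 𝕜) T).mapL
    (ContinuousLinearMap.apply 𝕜 E x)
  refine hasSum_apply.unique ?_
  simpa [pow_apply, smul_smul] using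
    (NormedSpace.exp_series_hasSum_exp' (𝕂 := 𝕜) μ).smul_const x

theorem exp_smul_eq_one_of_isIdempotentElem {𝕜 E : Type*} [RCLike 𝕜] [NormedAddCommGroup E]
    [NormedSpace 𝕜 E] [CompleteSpace E] {P : E →L[𝕜] E} (hP : IsIdempotentElem P) {c : 𝕜}
    (hc : NormedSpace.exp c = 1) : NormedSpace.exp (c • P) = 1 := by
  ext x
  have hPP : P (P x) = P x := DFunLike.congr_fun hP x
  have hrange : NormedSpace.exp (c • P) (P x) = P x := by
    rw [exp_apply_of_apply_eq_smul (μ := c) (by simp [hPP]), hc, one_smul]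
  have hker : NormedSpace.exp (c • P) (x - P x) = x - P x := by
    rw [exp_apply_of_apply_eq_smul (μ := 0) (by simp [hPP]), NormedSpace.exp_zero, one_smul]
  calc NormedSpace.exp (c • P) x
      = NormedSpace.exp (c • P) (P x) + NormedSpace.exp (c • P) (x - P x) := by
        rw [← map_add, add_sub_cancel]
    _ = x := by rw [hrange, hker, add_sub_cancel]

theorem det_eq_prod_of_apply_basis {R M ι : Type*} [CommRing R] [AddCommGroup M] [Module R M]
    [Fintype ι] (b : Module.Basis ι R M) {f : M →ₗ[R] M} {μ : ι → R}
    (h : ∀ i, f (b i) = μ i • b i) : LinearMap.det f = ∏ i, μ i := by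
  classical
  have toMatrix_eq : LinearMap.toMatrix b b f = Matrix.diagonal μ := by
    ext i j
    rcases eq_or_ne i j with rfl | hij
    · simp [LinearMap.toMatrix_apply, h]
    · simp [LinearMap.toMatrix_apply, h, hij]
  rw [← LinearMap.det_toMatrix b, toMatrix_eq, Matrix.det_diagonal]

variable {A : Type*} [CStarAlgebra A]

theorem contDiff_expUnitary_smul (a : selfAdjoint A) {n : WithTop ℕ∞} :
    ContDiff ℝ n fun t : ℝ => (expUnitary (t • a) : A) := by
  have hexp : ContDiff ℝ n (NormedSpace.exp : A → A) :=
    contDiff_iff_contDiffAt.2 fun x => (NormedSpace.exp_analytic (𝕂 := ℝ) x).contDiffAt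
  have hline : ContDiff ℝ n fun t : ℝ => I • (t • (a : A)) :=
    (contDiff_id.smul contDiff_const).const_smul I
  exact hexp.comp hline

end Exponential

section FiniteDimensional

theorem finite_spectrum_continuousLinearMap {𝕜 E : Type*} [NontriviallyNormedField 𝕜]
    [CompleteSpace 𝕜] [NormedAddCommGroup E] [NormedSpace 𝕜 E] [FiniteDimensional 𝕜 E]
    (T : E →L[𝕜] E) : (spectrum 𝕜 T).Finite := by
  rw [← AlgEquiv.spectrum_eq (Module.End.toContinuousLinearMap E).symm T]
  exact Module.End.finite_spectrum _

variable {H : Type*} [NormedAddCommGroup H] [InnerProductSpace ℂ H] [CompleteSpace H]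

/-- The trace of a self-adjoint operator as a real number, which is the phase of `exp (iA)` in the
universal cover of the unitary group. -/
noncomputable def realTrace (A : selfAdjoint (H →L[ℂ] H)) : ℝ :=
  (LinearMap.trace ℂ H (A : H →L[ℂ] H)).re

theorem realTrace_smul (t : ℝ) (A : selfAdjoint (H →L[ℂ] H)) :
    realTrace (t • A) = t * realTrace A := by
  have coe_smul : ((t • A : selfAdjoint (H →L[ℂ] H)) : H →ₗ[ℂ] H) =
      (t : ℂ) • ((A : H →L[ℂ] H) : H →ₗ[ℂ] H) := rfl
  rw [realTrace, coe_smul, map_smul, smul_eq_mul, re_ofReal_mul, realTrace]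

variable [FiniteDimensional ℂ H]

theorem exists_expUnitary_eq (u : unitary (H →L[ℂ] H)) :
    ∃ A : selfAdjoint (H →L[ℂ] H), expUnitary A = u :=
  ⟨_, expUnitary_argSelfAdjoint_of_continuousOn_s7
    ((finite_spectrum_continuousLinearMap (u : H →L[ℂ] H)).continuousOn _)⟩

theorem det_expUnitary (A : selfAdjoint (H →L[ℂ] H)) :
    (expUnitary A : H →L[ℂ] H).det = cexp (realTrace A * I) := by
  have hA : ((A : H →L[ℂ] H) : H →ₗ[ℂ] H).IsSymmetric := IsSelfAdjoint.isSymmetric A.2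
  let b := hA.eigenvectorBasis rfl
  have exp_apply_basis (i) :
      (expUnitary A : H →L[ℂ] H) (b i) = cexp (I * hA.eigenvalues rfl i) • b i := by
    have apply_basis : (A : H →L[ℂ] H) (b i) = (hA.eigenvalues rfl i : ℂ) • b i :=
      hA.apply_eigenvectorBasis rfl i
    rw [exp_eq_exp_ℂ]
    refine exp_apply_of_apply_eq_smul ?_
    rw [smul_apply, apply_basis, smul_smul]
  have det_eq_prod : (expUnitary A : H →L[ℂ] H).det = ∏ i, cexp (I * hA.eigenvalues rfl i) :=
    det_eq_prod_of_apply_basis b.toBasis (by simpa using exp_apply_basis)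
  have realTrace_eq : realTrace A = ∑ i, hA.eigenvalues rfl i := hA.re_trace_eq_sum_eigenvalues rfl
  rw [det_eq_prod, realTrace_eq, ← exp_sum, ← Finset.mul_sum, mul_comm, ofReal_sum]

theorem exists_expUnitary_eq_one_and_realTrace_eq [Nontrivial H] (k : ℤ) :
    ∃ B : selfAdjoint (H →L[ℂ] H), expUnitary B = 1 ∧ realTrace B = k * (2 * π) := by
  obtain ⟨x, hx⟩ := exists_norm_eq H zero_le_one
  have hP := InnerProductSpace.isStarProjection_rankOne_self (𝕜 := ℂ) hx
  let P : selfAdjoint (H →L[ℂ] H) := ⟨InnerProductSpace.rankOne ℂ x x, hP.isSelfAdjoint⟩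
  have realTrace_P : realTrace P = 1 := by
    simp [realTrace, P, InnerProductSpace.trace_rankOne, inner_self_eq_norm_sq_to_K, hx]
  have exp_eq_one : NormedSpace.exp (I * (k * (2 * π) : ℝ)) = 1 := by
    rw [← exp_eq_exp_ℂ, exp_eq_one_iff]
    exact ⟨k, by push_cast; ring⟩
  refine ⟨(k * (2 * π) : ℝ) • P, ?_, by rw [realTrace_smul, realTrace_P, mul_one]⟩
  have coe_smul : I • (((k * (2 * π) : ℝ) • P : selfAdjoint (H →L[ℂ] H)) : H →L[ℂ] H) =
      (I * (k * (2 * π) : ℝ)) • InnerProductSpace.rankOne ℂ x x := smul_smul I _ _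
  ext1
  rw [expUnitary_coe, coe_smul,
    exp_smul_eq_one_of_isIdempotentElem hP.isIdempotentElem exp_eq_one, OneMemClass.coe_one]

theorem exists_expUnitary_mul_expUnitary_eq [Nontrivial H] (u : unitary (H →L[ℂ] H)) {φ : ℝ}
    (hdet : (u : H →L[ℂ] H).det = cexp (φ * I)) :
    ∃ A B : selfAdjoint (H →L[ℂ] H),
      expUnitary A * expUnitary B = u ∧ realTrace A + realTrace B = φ := by
  obtain ⟨A, rfl⟩ := exists_expUnitary_eq u
  obtain ⟨k, hk⟩ := exists_int_mul_two_pi_eq_sub_of_exp_mul_I_eq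
    (hdet.symm.trans (det_expUnitary A))
  obtain ⟨B, hB, htr⟩ := exists_expUnitary_eq_one_and_realTrace_eq (H := H) k
  exact ⟨A, B, by rw [hB, mul_one], by rw [htr, ← hk, add_sub_cancel]⟩

theorem exists_contDiff_unitary_det_eq [Nontrivial H] (u : unitary (H →L[ℂ] H)) {φ : ℝ}
    (hdet : (u : H →L[ℂ] H).det = cexp (φ * I)) :
    ∃ γ : ℝ → unitary (H →L[ℂ] H), ContDiff ℝ 1 (fun t => (γ t : H →L[ℂ] H)) ∧
      γ 0 = 1 ∧ γ 1 = u ∧ ∀ t : ℝ, (γ t : H →L[ℂ] H).det = cexp ((t * φ : ℝ) * I) := by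
  obtain ⟨A, B, hAB, htr⟩ := exists_expUnitary_mul_expUnitary_eq u hdet
  refine ⟨fun t => expUnitary (t • A) * expUnitary (t • B), ?_, ?_, ?_, ?_⟩
  · exact (contDiff_expUnitary_smul A).mul (contDiff_expUnitary_smul B)
  · beta_reduce
    rw [zero_smul ℝ A, zero_smul ℝ B, expUnitary_zero, mul_one]
  · beta_reduce
    rwa [one_smul ℝ A, one_smul ℝ B]
  · intro t
    calc (expUnitary (t • A) * expUnitary (t • B) : H →L[ℂ] H).det
        = (expUnitary (t • A) : H →L[ℂ] H).det * (expUnitary (t • B) : H →L[ℂ] H).det :=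
          map_mul LinearMap.det _ _
      _ = cexp ((t * φ : ℝ) * I) := by
          rw [det_expUnitary, det_expUnitary, ← exp_add, ← add_mul, ← ofReal_add, realTrace_smul,
            realTrace_smul, ← mul_add, htr]

end FiniteDimensional

namespace InUCover

variable {N : ℕ} {u v : Op N} {φ ψ : ℝ}

theorem mul (hu : InUCover N u φ) (hv : InUCover N v ψ) : InUCover N (u * v) (φ + ψ) := by
  refine ⟨mul_mem hu.1 hv.1, ?_⟩
  rw [ContinuousLinearMap.toLinearMap_mul, map_mul, hu.2, hv.2, ← exp_add, ofReal_add, add_mul]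

theorem star (hu : InUCover N u φ) : InUCover N (star u) (-φ) := by
  refine ⟨Unitary.star_mem hu.1, ?_⟩
  have det_mul_det_star : u.det * (Star.star u).det = 1 := by
    rw [← map_mul LinearMap.det, ← ContinuousLinearMap.toLinearMap_mul, hu.1.2]
    exact map_one LinearMap.det
  rw [ofReal_neg, neg_mul, exp_neg, ← hu.2]
  exact eq_inv_of_mul_eq_one_right det_mul_det_star

theorem det_ne_zero (hu : InUCover N u φ) : u.det ≠ 0 :=
  hu.2.trans_ne (exp_ne_zero _)

end InUCover

/-- `t ↦ (γ t, f t)`, `t ∈ [a, b]`, is a piecewise C¹ curve in `Ũ(H)` from `(u, φ)` to `(v, ψ)`: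
the curves over which `ucoverDist` takes the infimum. -/
structure IsUCoverCurve {N : ℕ} (γ : ℝ → Op N) (f : ℝ → ℝ) (a b : ℝ) (u : Op N) (φ : ℝ)
    (v : Op N) (ψ : ℝ) : Prop where
  piecewiseC1On : PiecewiseC1On (fun t => (γ t, f t)) a b
  inUCover : ∀ t ∈ Icc a b, InUCover N (γ t) (f t)
  fst_left : γ a = u
  snd_left : f a = φ
  fst_right : γ b = v
  snd_right : f b = ψ

section UCoverCurve

variable {N : ℕ} {γ : ℝ → Op N} {f : ℝ → ℝ} {a b : ℝ} {u v : Op N} {φ ψ : ℝ}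

theorem ucoverDist_eq_sInf :
    ucoverDist N u φ v ψ =
      sInf {l | ∃ a b γ f, IsUCoverCurve γ f a b u φ v ψ ∧ l = pathLength γ a b} := by
  refine congrArg sInf (Set.ext fun l => ⟨?_, ?_⟩)
  · rintro ⟨a, b, γ, f, -, hC1, hmem, hγa, hfa, hγb, hfb, hl⟩
    exact ⟨a, b, γ, f, ⟨hC1, hmem, hγa, hfa, hγb, hfb⟩, hl⟩
  · rintro ⟨a, b, γ, f, ⟨hC1, hmem, hγa, hfa, hγb, hfb⟩, hl⟩
    exact ⟨a, b, γ, f, hC1.le, hC1, hmem, hγa, hfa, hγb, hfb, hl⟩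

theorem exists_isUCoverCurve (hN : 1 ≤ N) (hu : InUCover N u φ) (hv : InUCover N v ψ) :
    ∃ a b γ f, IsUCoverCurve γ f a b u φ v ψ := by
  have : Nonempty (Fin N) := ⟨⟨0, hN⟩⟩
  have hquot : InUCover N (star u * v) (-φ + ψ) := hu.star.mul hv
  obtain ⟨γ, hγ, hγ0, hγ1, hdet⟩ := exists_contDiff_unitary_det_eq ⟨_, hquot.1⟩ hquot.2
  refine ⟨0, 1, fun t => u * γ t, fun t => φ + t * (-φ + ψ), ?_, ?_, ?_, ?_, ?_, ?_⟩
  · exact .of_contDiff ((contDiff_const.mul hγ).prodMk (by fun_prop)) zero_le_one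
  · exact fun t _ => hu.mul ⟨(γ t).2, hdet t⟩
  · simp [hγ0]
  · simp
  · simp only [hγ1]
    rw [← mul_assoc, hu.1.2, one_mul]
  · simp

theorem exists_isUCoverCurve_pathLength_lt (hN : 1 ≤ N) (hu : InUCover N u φ)
    (hv : InUCover N v ψ) {r : ℝ} (h : ucoverDist N u φ v ψ < r) :
    ∃ a b γ f, IsUCoverCurve γ f a b u φ v ψ ∧ pathLength γ a b < r := by
  rw [ucoverDist_eq_sInf] at h
  obtain ⟨a₀, b₀, γ₀, f₀, hγ₀⟩ := exists_isUCoverCurve hN hu hv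
  obtain ⟨_, ⟨a, b, γ, f, hγ, rfl⟩, hlt⟩ :=
    exists_lt_of_csInf_lt (by exact ⟨_, a₀, b₀, γ₀, f₀, hγ₀, rfl⟩) h
  exact ⟨a, b, γ, f, hγ, hlt⟩

theorem IsUCoverCurve.norm_sub_le_pathLength (h : IsUCoverCurve γ f a b u φ v ψ) {t : ℝ}
    (ht : t ∈ Icc a b) : ‖γ t - u‖ ≤ pathLength γ a b :=
  h.fst_left ▸ (h.piecewiseC1On.contDiff_comp contDiff_fst).norm_sub_le_pathLength ht

theorem IsUCoverCurve.abs_sub_lt_pi (h : IsUCoverCurve γ f a b u φ v ψ)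
    (hdet : ∀ t ∈ Icc a b, (γ t).det ≠ -u.det) : |ψ - φ| < π := by
  have hab : a ≤ b := h.piecewiseC1On.le
  have hf : ContinuousOn f (Icc a b) :=
    continuous_snd.comp_continuousOn h.piecewiseC1On.continuousOn
  have ha : a ∈ Icc a b := left_mem_Icc.2 hab
  rw [← h.snd_left, ← h.snd_right]
  refine abs_sub_lt_pi_of_forall_exp_ne_neg isPreconnected_Icc hf ha (right_mem_Icc.2 hab) ?_
  intro t ht
  rw [← (h.inUCover t ht).2, ← (h.inUCover a ha).2, h.fst_left]
  exact hdet t ht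

theorem norm_sub_le_ucoverDist (hN : 1 ≤ N) (hu : InUCover N u φ) (hv : InUCover N v ψ) :
    ‖v - u‖ ≤ ucoverDist N u φ v ψ := by
  refine le_of_forall_gt fun r hr => ?_
  obtain ⟨a, b, γ, f, hγ, hlt⟩ := exists_isUCoverCurve_pathLength_lt hN hu hv hr
  rw [← hγ.fst_right]
  exact (hγ.norm_sub_le_pathLength (right_mem_Icc.2 hγ.piecewiseC1On.le)).trans_lt hlt

end UCoverCurve

theorem exists_pos_forall_norm_sub_lt_det_ne_neg {𝕜 E : Type*} [RCLike 𝕜]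
    [NormedAddCommGroup E] [NormedSpace 𝕜 E] {u : E →L[𝕜] E} (hu : u.det ≠ 0) :
    ∃ ε > 0, ∀ w : E →L[𝕜] E, ‖w - u‖ < ε → w.det ≠ -u.det := by
  have hcont : Continuous fun w : E →L[𝕜] E => w.det := ContinuousLinearMap.continuous_det
  have hne : u.det ≠ -u.det := self_ne_neg.2 hu
  obtain ⟨ε, hε, hball⟩ := Metric.eventually_nhds_iff.1 (hcont.continuousAt.eventually_ne hne)
  exact ⟨ε, hε, fun w hw => hball (by rwa [dist_eq_norm])⟩

/-- the distance `d̃` on `Ũ(H)` is non-degenerate: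
`d̃((u,φ),(v,ψ)) = 0` implies `u = v` and `φ = ψ`. -/
theorem ucoverDist_eq_zero_iff (N : ℕ) (hN : 1 ≤ N) (u v : Op N) (φ ψ : ℝ)
    (hu : InUCover N u φ) (hv : InUCover N v ψ)
    (h : ucoverDist N u φ v ψ = 0) : u = v ∧ φ = ψ := by
  have huv : u = v := by
    rw [eq_comm, ← sub_eq_zero, ← norm_le_zero_iff, ← h]
    exact norm_sub_le_ucoverDist hN hu hv
  obtain ⟨ε, hε, hball⟩ := exists_pos_forall_norm_sub_lt_det_ne_neg hu.det_ne_zero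
  obtain ⟨a, b, γ, f, hγ, hlt⟩ := exists_isUCoverCurve_pathLength_lt hN hu hv (h.trans_lt hε)
  have phase_lt : |ψ - φ| < π :=
    hγ.abs_sub_lt_pi fun t ht => hball _ ((hγ.norm_sub_le_pathLength ht).trans_lt hlt)
  have phase_exp : cexp (φ * I) = cexp (ψ * I) := by rw [← hu.2, ← hv.2, huv]
  exact ⟨huv, eq_of_exp_mul_I_eq_of_abs_sub_lt_pi phase_exp phase_lt⟩
end
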